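/- arXiv:1210.5971 — 5 statements merged into one kernel-verified Lean document; each statement's English description precedes it below -/
import Mathlib

section
/- Let α be a symmetric bilinear map from the Euclidean plane to a real inner product space E. For every θ₀ ∈ ℝ, the lateral geodesic deviation −(1/6)⟪α(J t(θ₀), t(θ₀)), α(t(θ₀), t(θ₀))⟫ vanishes if and only if θ₀ is a critical point of the function θ ↦ ‖α(t(θ), t(θ))‖², i.e. the directions where the lateral deviation vanishes are exactly the extremal directions of the frontal geodesic deviation. -/
/-! The unit direction satisfies `t' = J t`, so for symmetric `α` the derivative of
`α(t, t)` is `2 α(J t, t)` (`hasDerivAt_alpha_tvec`). Hence the derivative of `‖α(t, t)‖²` is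
`4 ⟪α(J t, t), α(t, t)⟫`, which is `-24` times the lateral deviation, and the two vanish
together. -/

open Real
open scoped RealInnerProductSpace

noncomputable section

/-- First vector of the orthonormal tangent frame. -/
def e₁ : EuclideanSpace ℝ (Fin 2) := EuclideanSpace.single 0 1

/-- Second vector of the orthonormal tangent frame. -/
def e₂ : EuclideanSpace ℝ (Fin 2) := EuclideanSpace.single 1 1

/-- The unit tangent vector in the direction `θ`. -/
def tvec (θ : ℝ) : EuclideanSpace ℝ (Fin 2) := Real.cos θ • e₁ + Real.sin θ • e₂

/-- Rotation by `π/2` in the plane: `J(x, y) = (-y, x)`. -/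
def Jrot (x : EuclideanSpace ℝ (Fin 2)) : EuclideanSpace ℝ (Fin 2) :=
  (WithLp.equiv 2 (Fin 2 → ℝ)).symm ![-x 1, x 0]

lemma Jrot_tvec (θ : ℝ) : Jrot (tvec θ) = -Real.sin θ • e₁ + Real.cos θ • e₂ := by
  ext i
  fin_cases i <;> simp [Jrot, tvec, e₁, e₂]

/-- Since `t' = J t` and `α` is symmetric, `(α(t, t))' = 2 α(J t, t)`. -/
lemma hasDerivAt_alpha_tvec {E : Type*} [NormedAddCommGroup E] [InnerProductSpace ℝ E]
    (α : EuclideanSpace ℝ (Fin 2) →ₗ[ℝ] EuclideanSpace ℝ (Fin 2) →ₗ[ℝ] E)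
    (hsymm : ∀ x y, α x y = α y x) (θ : ℝ) :
    HasDerivAt (fun φ : ℝ => α (tvec φ) (tvec φ))
      ((2 : ℝ) • α (Jrot (tvec θ)) (tvec θ)) θ := by
  -- Expanding in the frame leaves scalar trigonometric coefficients to differentiate, so no
  -- continuity of `α` is needed.
  have hexp : (fun φ : ℝ => α (tvec φ) (tvec φ)) = fun φ =>
      (Real.cos φ * Real.cos φ) • α e₁ e₁ + (2 * (Real.cos φ * Real.sin φ)) • α e₁ e₂
        + (Real.sin φ * Real.sin φ) • α e₂ e₂ := by
    funext φ
    simp only [tvec, map_add, map_smul, LinearMap.add_apply, LinearMap.smul_apply, hsymm e₂ e₁]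
    module
  have hc := Real.hasDerivAt_cos θ
  have hs := Real.hasDerivAt_sin θ
  rw [hexp, Jrot_tvec]
  refine ((((hc.mul hc).smul_const (α e₁ e₁)).add
    (((hc.mul hs).const_mul 2).smul_const (α e₁ e₂))).add
    ((hs.mul hs).smul_const (α e₂ e₂))).congr_deriv ?_
  simp only [tvec, map_add, map_smul, LinearMap.add_apply, LinearMap.smul_apply, hsymm e₂ e₁]
  module

/-- The directions where the lateral geodesic deviation vanishes are exactly the
extremal directions of the frontal geodesic deviation. -/
theorem lateral_deviation_zero_iff_extremal_frontal
    {E : Type*} [NormedAddCommGroup E] [InnerProductSpace ℝ E]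
    (α : EuclideanSpace ℝ (Fin 2) →ₗ[ℝ] EuclideanSpace ℝ (Fin 2) →ₗ[ℝ] E)
    (hsymm : ∀ x y, α x y = α y x) (θ₀ : ℝ) :
    -(1 / 6 : ℝ) * ⟪α (Jrot (tvec θ₀)) (tvec θ₀), α (tvec θ₀) (tvec θ₀)⟫ = 0 ↔
      deriv (fun φ : ℝ => ‖α (tvec φ) (tvec φ)‖ ^ 2) θ₀ = 0 := by
  have hd := (hasDerivAt_alpha_tvec α hsymm θ₀).norm_sq
  rw [hd.deriv, real_inner_smul_right, real_inner_comm]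
  constructor <;> intro h <;> linarith

end
end

section
/- Let α be a symmetric bilinear map from the Euclidean plane to a real inner product space E, and let θ ∈ ℝ with cos θ ≠ 0, p = tan θ. Then the derivative at θ of the function θ ↦ ‖α(t(θ), t(θ))‖² vanishes if and only if p⁴(bc − hc) + p³(2bb − 2cc − 2hb) − 6·bc·p² + p(2cc − 2bb − 2hb) + bc + hc = 0, where hb = ⟪H,B⟫, hc = ⟪H,C⟫, bb = ⟪B,B⟫, cc = ⟪C,C⟫, bc = ⟪B,C⟫. -/
/-!
In the doubled angle the second fundamental form traces the curvature ellipse,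
`α(t(φ), t(φ)) = H + cos 2φ • B + sin 2φ • C`, so its squared norm is an explicit quadratic
polynomial in `cos 2φ` and `sin 2φ`. With `u = cos 2θ` and `v = sin 2θ`, its derivative at `θ` is
`4 (u v (cc - bb) - v hb + u hc + (u² - v²) bc)`. Substituting `sin θ = p cos θ`, and using
`cos² θ + sin² θ = 1` to make the terms in `hb` and `hc` homogeneous of degree four, turns this
into `4 cos⁴ θ` times the quartic in `p`; the factor `4 cos⁴ θ` is nonzero.
-/

open Real
open scoped RealInnerProductSpace

noncomputable section

/-- The curvature ellipse: `α(t(φ), t(φ)) = H + cos 2φ • B + sin 2φ • C`, with the double angles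
expanded in `cos φ` and `sin φ`. -/
lemma apply_tvec_eq {E : Type*} [NormedAddCommGroup E] [InnerProductSpace ℝ E]
    (α : EuclideanSpace ℝ (Fin 2) →ₗ[ℝ] EuclideanSpace ℝ (Fin 2) →ₗ[ℝ] E)
    (hsymm : ∀ x y, α x y = α y x) (φ : ℝ) :
    α (tvec φ) (tvec φ) = (1 / 2 : ℝ) • (α e₁ e₁ + α e₂ e₂)
      + (cos φ ^ 2 - sin φ ^ 2) • ((1 / 2 : ℝ) • (α e₁ e₁ - α e₂ e₂))
      + (2 * sin φ * cos φ) • α e₁ e₂ := by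
  have h1 : sin φ ^ 2 = 1 - cos φ ^ 2 := by linarith [sin_sq_add_cos_sq φ]
  simp only [tvec, map_add, map_smul, LinearMap.add_apply, LinearMap.smul_apply, hsymm e₂ e₁]
  match_scalars <;> linarith

/-- The squared norm of a point `H + u • B + v • C`, expanded in inner products. -/
lemma norm_sq_ellipse {E : Type*} [NormedAddCommGroup E] [InnerProductSpace ℝ E]
    (H B C : E) (u v : ℝ) :
    ‖H + u • B + v • C‖ ^ 2 = ⟪H, H⟫ + u ^ 2 * ⟪B, B⟫ + v ^ 2 * ⟪C, C⟫
      + 2 * u * ⟪H, B⟫ + 2 * v * ⟪H, C⟫ + 2 * (u * v) * ⟪B, C⟫ := by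
  rw [← real_inner_self_eq_norm_sq]
  simp only [inner_add_left, inner_add_right, real_inner_smul_left, real_inner_smul_right,
    real_inner_comm H B, real_inner_comm H C, real_inner_comm B C]
  ring

/-- The quartic equation in `p = tan θ` for the extremal directions of the frontal
geodesic deviation. -/
theorem extremal_frontal_directions_quartic
    {E : Type*} [NormedAddCommGroup E] [InnerProductSpace ℝ E]
    (α : EuclideanSpace ℝ (Fin 2) →ₗ[ℝ] EuclideanSpace ℝ (Fin 2) →ₗ[ℝ] E)
    (hsymm : ∀ x y, α x y = α y x) (θ : ℝ) (hθ : Real.cos θ ≠ 0)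
    (H B C : E) (hH : H = (1 / 2 : ℝ) • (α e₁ e₁ + α e₂ e₂))
    (hB : B = (1 / 2 : ℝ) • (α e₁ e₁ - α e₂ e₂)) (hC : C = α e₁ e₂)
    (p hb hc bb cc bc : ℝ) (hp : p = Real.tan θ)
    (hhb : hb = ⟪H, B⟫) (hhc : hc = ⟪H, C⟫) (hbb : bb = ⟪B, B⟫)
    (hcc : cc = ⟪C, C⟫) (hbc : bc = ⟪B, C⟫) :
    deriv (fun φ : ℝ => ‖α (tvec φ) (tvec φ)‖ ^ 2) θ = 0 ↔
      p ^ 4 * (bc - hc) + p ^ 3 * (2 * bb - 2 * cc - 2 * hb)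
        - 6 * bc * p ^ 2 + p * (2 * cc - 2 * bb - 2 * hb) + bc + hc = 0 := by
  have hf : (fun φ : ℝ => ‖α (tvec φ) (tvec φ)‖ ^ 2) = fun φ : ℝ =>
      ⟪H, H⟫ + (cos φ ^ 2 - sin φ ^ 2) ^ 2 * bb + (2 * sin φ * cos φ) ^ 2 * cc
        + 2 * (cos φ ^ 2 - sin φ ^ 2) * hb + 2 * (2 * sin φ * cos φ) * hc
        + 2 * ((cos φ ^ 2 - sin φ ^ 2) * (2 * sin φ * cos φ)) * bc := by
    funext φ
    rw [apply_tvec_eq α hsymm, ← hH, ← hB, ← hC, norm_sq_ellipse, hhb, hhc, hbb, hcc, hbc]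
  have hu : HasDerivAt (fun φ : ℝ => cos φ ^ 2 - sin φ ^ 2) (-2 * (2 * sin θ * cos θ)) θ := by
    refine (((hasDerivAt_cos θ).pow 2).sub ((hasDerivAt_sin θ).pow 2)).congr_deriv ?_
    push_cast
    ring
  have hv : HasDerivAt (fun φ : ℝ => 2 * sin φ * cos φ) (2 * (cos θ ^ 2 - sin θ ^ 2)) θ := by
    refine (((hasDerivAt_sin θ).const_mul 2).mul (hasDerivAt_cos θ)).congr_deriv ?_
    ring
  have hd := ((((((hu.pow 2).mul_const bb).const_add ⟪H, H⟫).add ((hv.pow 2).mul_const cc)).add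
    ((hu.const_mul 2).mul_const hb)).add ((hv.const_mul 2).mul_const hc)).add
    (((hu.mul hv).const_mul 2).mul_const bc)
  have hs : sin θ = p * cos θ := by rw [hp, tan_mul_cos hθ]
  have h1 : cos θ ^ 2 * (1 + p ^ 2) = 1 := by
    have h := sin_sq_add_cos_sq θ
    rw [hs] at h
    linarith
  have key : deriv (fun φ : ℝ => ‖α (tvec φ) (tvec φ)‖ ^ 2) θ = 4 * cos θ ^ 4 *
      (p ^ 4 * (bc - hc) + p ^ 3 * (2 * bb - 2 * cc - 2 * hb)
        - 6 * bc * p ^ 2 + p * (2 * cc - 2 * bb - 2 * hb) + bc + hc) := by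
    rw [hf]
    refine hd.deriv.trans ?_
    rw [hs]
    push_cast
    -- `h1` raises the terms in `hb` and `hc` from degree two to degree four in `cos θ`.
    linear_combination (8 * p * cos θ ^ 2 * hb - 4 * cos θ ^ 2 * (1 - p ^ 2) * hc) * h1
  rw [key, mul_eq_zero, or_iff_right (by positivity)]

end
end

section
/- Let k₁, k₂ ∈ ℝ with k₂ ≠ 0 and k₁ ≠ k₂, let θ ∈ ℝ with cos θ ≠ 0 and p = tan θ, and suppose −k₂·p⁴ + 3·(k₂ − k₁)·p² + k₁ = 0. Set D = 9·(k₁² + k₂²) − 14·k₁·k₂. Then D ≥ 0, and if both 3k₁ − 5k₂ + √D ≠ 0 and 3k₁ − 5k₂ − √D ≠ 0, the normal curvature k₁·cos²θ + k₂·sin²θ equals (k₁k₂ − 3k₂² + k₂·√D)/(3k₁ − 5k₂ + √D) or (k₁k₂ − 3k₂² − k₂·√D)/(3k₁ − 5k₂ − √D). -/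
open Real

/-!
The extremality condition is a quadratic in `p ^ 2 = tan² θ` with discriminant `D`, so
`2 * k₂ * p ^ 2 = 3 * (k₂ - k₁) ± √D`. Since `cos² θ = 1 / (1 + p ^ 2)`, the normal curvature is
`(k₁ + k₂ * p ^ 2) / (1 + p ^ 2)`; expanding this fraction by `-2 * k₂` and substituting the two
roots gives the two stated values.
-/

/-- The normal curvatures of the extremal directions of the lateral geodesic deviation
at a non-umbilic point of a surface in `ℝ³`. -/
theorem normal_curvature_of_extremal_lateral_directions (k₁ k₂ : ℝ) (hk₂ : k₂ ≠ 0)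
    (hne : k₁ ≠ k₂) (θ : ℝ) (hθ : Real.cos θ ≠ 0) (p : ℝ) (hp : p = Real.tan θ)
    (hquartic : -k₂ * p ^ 4 + 3 * (k₂ - k₁) * p ^ 2 + k₁ = 0)
    (D : ℝ) (hD : D = 9 * (k₁ ^ 2 + k₂ ^ 2) - 14 * k₁ * k₂) :
    0 ≤ D ∧
      ((3 * k₁ - 5 * k₂ + Real.sqrt D ≠ 0 ∧ 3 * k₁ - 5 * k₂ - Real.sqrt D ≠ 0) →
        (k₁ * Real.cos θ ^ 2 + k₂ * Real.sin θ ^ 2 =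
            (k₁ * k₂ - 3 * k₂ ^ 2 + k₂ * Real.sqrt D) / (3 * k₁ - 5 * k₂ + Real.sqrt D) ∨
          k₁ * Real.cos θ ^ 2 + k₂ * Real.sin θ ^ 2 =
            (k₁ * k₂ - 3 * k₂ ^ 2 - k₂ * Real.sqrt D) / (3 * k₁ - 5 * k₂ - Real.sqrt D))) := by
  have hD0 : 0 ≤ D := by
    rw [hD]; nlinarith [sq_nonneg (k₁ - k₂), sq_nonneg k₁, sq_nonneg k₂]
  refine ⟨hD0, fun ⟨h₁, h₂⟩ => ?_⟩
  have hs : √D ^ 2 = D := Real.sq_sqrt hD0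
  have hsin : Real.sin θ ^ 2 = p ^ 2 * Real.cos θ ^ 2 := by
    rw [hp, Real.tan_eq_sin_div_cos]; field_simp
  have hone : Real.cos θ ^ 2 * (1 + p ^ 2) = 1 := by
    linear_combination Real.sin_sq_add_cos_sq θ - hsin
  -- `D` is the discriminant of the quadratic in `p ^ 2`; complete the square and factor.
  have hroots : (2 * k₂ * p ^ 2 - 3 * (k₂ - k₁) + √D) *
      (2 * k₂ * p ^ 2 - 3 * (k₂ - k₁) - √D) = 0 := by
    linear_combination (-4 * k₂) * hquartic - hs - hD
  rw [hsin]
  -- On either branch the denominator is `-2 * k₂ * (1 + p ^ 2)` and the numerator is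
  -- `-2 * k₂ * (k₁ + k₂ * p ^ 2)`.
  rcases mul_eq_zero.mp hroots with h | h
  · left
    rw [eq_div_iff h₁]
    linear_combination (-2 * k₂ * (k₁ + k₂ * p ^ 2)) * hone +
      ((k₁ + k₂ * p ^ 2) * Real.cos θ ^ 2 - k₂) * h
  · right
    rw [eq_div_iff h₂]
    linear_combination (-2 * k₂ * (k₁ + k₂ * p ^ 2)) * hone +
      ((k₁ + k₂ * p ^ 2) * Real.cos θ ^ 2 - k₂) * h
end

section
/- Let N be the 2-dimensional Euclidean plane, and let H, B, C ∈ N with ⟪B,C⟫ = 0, ‖B‖ ≥ ‖C‖, and not both B = 0 and C = 0 (non-umbilic point). Set b₁ = H + B and b₂ = H − B. Then there exists u ∈ N with ⟪u,b₁⟫ = 1, ⟪u,b₂⟫ = 1 and ⟪u,C⟫ = 0 if and only if C = 0 and b₁, b₂ are linearly independent (i.e. the point is semiumbilic and not an inflection point). -/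
/-!
Adding and subtracting the two unit equations, `u` is an umbilic direction exactly when
`⟪u, H⟫ = 1`, `⟪u, B⟫ = 0` and `⟪u, C⟫ = 0`. Non-umbilicity together with `‖C‖ ≤ ‖B‖` gives
`B ≠ 0`. Hence, if `u` exists, `u` and `B` are nonzero and orthogonal, so they span the plane,
and `C`, orthogonal to both, vanishes; pairing a linear relation between `H + B` and `H - B`
with `u` shows that it is trivial. Conversely, if `C = 0` and `H + B`, `H - B` are independent,
their determinant is nonzero and Cramer's rule provides `u`.
-/

open scoped RealInnerProductSpace

noncomputable section

lemma inner_plane (x y : EuclideanSpace ℝ (Fin 2)) : ⟪x, y⟫ = x 0 * y 0 + x 1 * y 1 := by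
  simp [PiLp.inner_apply, Fin.sum_univ_two, mul_comm]

lemma plane_eq_zero_of_orthogonal {u B C : EuclideanSpace ℝ (Fin 2)} (hu : u ≠ 0) (hB : B ≠ 0)
    (huB : ⟪u, B⟫ = 0) (huC : ⟪u, C⟫ = 0) (hBC : ⟪B, C⟫ = 0) : C = 0 := by
  have hu' := real_inner_self_pos.mpr hu
  have hB' := real_inner_self_pos.mpr hB
  rw [inner_plane] at *
  have hdet : u 0 * B 1 - u 1 * B 0 ≠ 0 := by
    intro h
    -- Lagrange's identity: `‖u‖² ‖B‖² = ⟪u, B⟫² + det(u, B)²`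
    have : (u 0 * u 0 + u 1 * u 1) * (B 0 * B 0 + B 1 * B 1) = 0 := by
      linear_combination (u 0 * B 0 + u 1 * B 1) * huB + (u 0 * B 1 - u 1 * B 0) * h
    exact (mul_pos hu' hB').ne' this
  ext i
  fin_cases i
  · refine (mul_eq_zero.mp ?_).resolve_left hdet
    change (u 0 * B 1 - u 1 * B 0) * C 0 = 0
    linear_combination B 1 * huC - u 1 * hBC
  · refine (mul_eq_zero.mp ?_).resolve_left hdet
    change (u 0 * B 1 - u 1 * B 0) * C 1 = 0
    linear_combination u 0 * hBC - B 0 * huC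

lemma plane_det_ne_zero {x y : EuclideanSpace ℝ (Fin 2)} (h : LinearIndependent ℝ ![x, y]) :
    x 0 * y 1 - x 1 * y 0 ≠ 0 := by
  intro hd
  rw [LinearIndependent.pair_iff] at h
  -- The rows of the adjugate of the matrix `(x, y)` are linear relations when `det = 0`.
  have h1 := h (y 1) (-x 1) (by
    ext i; fin_cases i <;> simp <;> linarith)
  have h0 := h (y 0) (-x 0) (by
    ext i; fin_cases i <;> simp <;> linarith)
  have hx : x = 0 := by
    ext i
    fin_cases i
    · simpa using h0.2
    · simpa using h1.2
  exact one_ne_zero (h 1 0 (by simp [hx])).1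

lemma plane_exists_dual {x y : EuclideanSpace ℝ (Fin 2)} (h : LinearIndependent ℝ ![x, y]) :
    ∃ u : EuclideanSpace ℝ (Fin 2), ⟪u, x⟫ = 1 ∧ ⟪u, y⟫ = 1 := by
  have hd := plane_det_ne_zero h
  refine ⟨!₂[(y 1 - x 1) / (x 0 * y 1 - x 1 * y 0), (x 0 - y 0) / (x 0 * y 1 - x 1 * y 0)],
    ?_, ?_⟩ <;>
  · rw [inner_plane]
    simp only [PiLp.toLp_apply, Matrix.cons_val_zero, Matrix.cons_val_one]
    rw [div_mul_eq_mul_div, div_mul_eq_mul_div, ← add_div, div_eq_one_iff_eq hd]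
    ring

/-- At a non-umbilic point of a surface in `ℝ⁴` there is an umbilic direction if and only
if the point is semiumbilic and not an inflection point. Here `b₁ = H + B = α(t₁,t₁)`,
`b₂ = H − B = α(t₂,t₂)` and `C = α(t₁,t₂)` in an adapted orthonormal tangent frame. -/
theorem umbilic_direction_iff_semiumbilic_non_inflection
    (H B C : EuclideanSpace ℝ (Fin 2))
    (hBC : ⟪B, C⟫ = 0) (hnorm : ‖C‖ ≤ ‖B‖) (hnonumb : ¬(B = 0 ∧ C = 0)) :
    (∃ u : EuclideanSpace ℝ (Fin 2),
        ⟪u, H + B⟫ = 1 ∧ ⟪u, H - B⟫ = 1 ∧ ⟪u, C⟫ = 0) ↔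
      (C = 0 ∧ LinearIndependent ℝ ![H + B, H - B]) := by
  constructor
  · rintro ⟨u, h1, h2, huC⟩
    have hB : B ≠ 0 := by
      rintro rfl
      exact hnonumb ⟨rfl, by simpa using hnorm⟩
    have hu : u ≠ 0 := by
      rintro rfl
      simp at h1
    have huB : ⟪u, B⟫ = 0 := by
      rw [inner_add_right] at h1
      rw [inner_sub_right] at h2
      linarith
    refine ⟨plane_eq_zero_of_orthogonal hu hB huB huC hBC, ?_⟩
    rw [LinearIndependent.pair_iff]
    intro s t hst
    have hsum : s + t = 0 := by
      have := congrArg (fun v => ⟪u, v⟫) hst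
      simpa only [inner_add_right (x := u) (y := s • (H + B)), inner_smul_right, h1, h2,
        mul_one, inner_zero_right] using this
    obtain rfl : t = -s := by linarith
    have h2B : (2 * s) • B = 0 := by
      rw [← hst]
      module
    have hs : s = 0 := by
      simpa using (smul_eq_zero.mp h2B).resolve_right hB
    simp [hs]
  · rintro ⟨rfl, hli⟩
    obtain ⟨u, h1, h2⟩ := plane_exists_dual hli
    exact ⟨u, h1, h2, inner_zero_right u⟩

end
end

section
/- Let N be the 2-dimensional Euclidean plane with J the rotation by π/2, and let H, B ∈ N be such that b₁ = H + B and b₂ = H − B are linearly independent. Then ⟪H, JB⟫ ≠ 0, and the vector u = JB/⟪H, JB⟫ satisfies ⟪u, b₁⟫ = 1 and ⟪u, b₂⟫ = 1; i.e. u is an umbilical focus direction at a semiumbilic non-inflection point. -/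
/-!
Since `JB ⊥ B`, both `⟪JB, H + B⟫` and `⟪JB, H - B⟫` equal `⟪JB, H⟫`, so dividing by it gives the
two equations. The number `⟪H, JB⟫` is, up to sign, the determinant of `H, B`; it is nonzero because
`H + B` and `H - B` span the same subspace as `H` and `B`.
-/

open scoped RealInnerProductSpace

noncomputable section

theorem Jrot_inner_self (x : EuclideanSpace ℝ (Fin 2)) : ⟪Jrot x, x⟫ = 0 := by
  simp [Jrot, PiLp.inner_apply, Fin.sum_univ_two]
  ring

theorem inner_Jrot (x y : EuclideanSpace ℝ (Fin 2)) :
    ⟪x, Jrot y⟫ = x 1 * y 0 - x 0 * y 1 := by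
  simp [Jrot, PiLp.inner_apply, Fin.sum_univ_two]
  ring

/-- Explicit formula for the umbilical focus direction at a semiumbilic non-inflection
point of a surface in `ℝ⁴`: here `b₁ = H + B` and `b₂ = H − B` are linearly independent. -/
theorem umbilical_focus_formula
    (H B : EuclideanSpace ℝ (Fin 2))
    (hli : LinearIndependent ℝ ![H + B, H - B]) :
    ⟪H, Jrot B⟫ ≠ 0 ∧
      ⟪(⟪H, Jrot B⟫)⁻¹ • Jrot B, H + B⟫ = 1 ∧
      ⟪(⟪H, Jrot B⟫)⁻¹ • Jrot B, H - B⟫ = 1 := by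
  have hne : ⟪H, Jrot B⟫ ≠ 0 := by
    intro h0
    rw [inner_Jrot] at h0
    rw [LinearIndependent.pair_iff] at hli
    -- When the determinant of `H, B` vanishes, `B i • H = H i • B` for each coordinate `i`;
    -- rewritten in terms of `H + B` and `H - B`, this forces `H i = B i = 0`.
    have h1 := hli (B 0 - H 0) (B 0 + H 0) (by
      ext i
      fin_cases i <;> simp <;> linarith)
    have h2 := hli (B 1 - H 1) (B 1 + H 1) (by
      ext i
      fin_cases i <;> simp <;> linarith)
    have h3 := hli 1 0 (by
      ext i
      fin_cases i <;> simp <;> linarith [h1.2, h2.2])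
    exact one_ne_zero h3.1
  refine ⟨hne, ?_, ?_⟩
  · rw [real_inner_smul_left, inner_add_right, Jrot_inner_self, add_zero,
      real_inner_comm H, inv_mul_cancel₀ hne]
  · rw [real_inner_smul_left, inner_sub_right, Jrot_inner_self, sub_zero,
      real_inner_comm H, inv_mul_cancel₀ hne]

end
end
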